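/- For all integers n ≥ 1 and k ≥ 1, the sum over all Dyck paths P of length 2n of height at most 2 of k^(r(P)−1), where r(P) is the number of returns to zero of P, equals (k+1)^(n−1). (Equivalently, Dyck paths of length 2n and height at most 2 in which each return to the x-axis except the last carries one of k colors are counted by (k+1)^(n−1).) -/

import Mathlib

/-- The step associated to a letter: `true` is an up step `+1`, `false` a down step `-1`. -/
def stepVal (b : Bool) : ℤ := if b then 1 else -1

/-- Partial sum `S_i`: the sum of the first `i` steps of the word `w`. -/
def psum {L : ℕ} (w : Fin L → Bool) (i : ℕ) : ℤ :=
  ∑ j : Fin L, if (j : ℕ) < i then stepVal (w j) else 0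

/-- A Dyck bridge: a `±1` word whose total sum is `0`. -/
def IsBridge {L : ℕ} (w : Fin L → Bool) : Prop := psum w L = 0

/-- A Dyck path: a bridge all of whose partial sums are nonnegative. -/
def IsDyck {L : ℕ} (w : Fin L → Bool) : Prop :=
  IsBridge w ∧ ∀ i : ℕ, 0 ≤ psum w i

/-- A peak at (0-based) position `i`: step `i` is up and step `i+1` is down. -/
def IsPeak {L : ℕ} (w : Fin L → Bool) (i : ℕ) : Prop :=
  ∃ j k : Fin L, (j : ℕ) = i ∧ (k : ℕ) = i + 1 ∧ w j = true ∧ w k = false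

/-- The height of the peak at (0-based) position `i`, i.e. the altitude
reached by its up step. -/
def peakHeight {L : ℕ} (w : Fin L → Bool) (i : ℕ) : ℤ := psum w (i + 1)

/-- A crossing of the x-axis at (1-based) index `i`: `0 < i < L`, `S_i = 0`,
and the steps `w_i`, `w_{i+1}` (1-based) are equal. -/
def IsCrossing {L : ℕ} (w : Fin L → Bool) (i : ℕ) : Prop :=
  0 < i ∧ i < L ∧ psum w i = 0 ∧
    ∃ j k : Fin L, (j : ℕ) + 1 = i ∧ (k : ℕ) = i ∧ w j = w k

theorem psum_zero' {L : ℕ} (w : Fin L → Bool) : psum w 0 = 0 := by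
  simp [psum]

theorem psum_cons' {L : ℕ} (b : Bool) (w : Fin L → Bool) (i : ℕ) :
    psum (Fin.cons b w : Fin (L + 1) → Bool) (i + 1) = stepVal b + psum w i := by
  simp [psum, Fin.sum_univ_succ]

/-- Admissible words from height `h`. -/
def Adm {L : ℕ} (h : ℤ) (w : Fin L → Bool) : Prop :=
  (∀ i : ℕ, 0 ≤ h + psum w i ∧ h + psum w i ≤ 2) ∧ h + psum w L = 0

theorem adm_cons {L : ℕ} (h : ℤ) (b : Bool) (w : Fin L → Bool) (h0 : 0 ≤ h) (h2 : h ≤ 2) :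
    Adm h (Fin.cons b w : Fin (L + 1) → Bool) ↔ Adm (h + stepVal b) w := by
  unfold Adm
  rw [psum_cons', ← add_assoc]
  refine and_congr_left fun _ => ⟨fun H i => ?_, fun H i => ?_⟩
  · have := H (i + 1)
    rwa [psum_cons', ← add_assoc] at this
  · cases i with
    | zero => rw [psum_zero']; omega
    | succ i => rw [psum_cons', ← add_assoc]; exact H i

open scoped Classical in
/-- Weighted count. -/
noncomputable def FF (k L : ℕ) (h : ℤ) : ℕ :=
  ∑ w : Fin L → Bool, if Adm h w then
    ∏ i ∈ Finset.range L, (if h + psum w (i + 1) = 0 then k else 1) else 0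

theorem FF_out (k L : ℕ) (h : ℤ) (hh : h < 0 ∨ 2 < h) : FF k L h = 0 := by
  unfold FF
  refine Finset.sum_eq_zero fun w _ => if_neg fun H => ?_
  have := H.1 0
  rw [psum_zero'] at this
  omega

theorem FF_succ (k L : ℕ) (h : ℤ) (h0 : 0 ≤ h) (h2 : h ≤ 2) :
    FF k (L + 1) h = (if h + 1 = 0 then k else 1) * FF k L (h + 1)
      + (if h - 1 = 0 then k else 1) * FF k L (h - 1) := by
  have key : ∀ (b : Bool) (w : Fin L → Bool),
      (∏ i ∈ Finset.range (L + 1),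
        (if h + psum (Fin.cons b w : Fin (L + 1) → Bool) (i + 1) = 0 then k else 1))
      = (if h + stepVal b = 0 then k else 1) *
        ∏ i ∈ Finset.range L, (if (h + stepVal b) + psum w (i + 1) = 0 then k else 1) := by
    intro b w
    rw [Finset.prod_range_succ', mul_comm]
    simp only [psum_cons', psum_zero', add_zero]
    simp only [add_assoc]
  have key2 : ∀ b : Bool, (∑ w : Fin L → Bool,
      open scoped Classical in if Adm h (Fin.cons b w : Fin (L + 1) → Bool) then
        ∏ i ∈ Finset.range (L + 1),
        (if h + psum (Fin.cons b w : Fin (L + 1) → Bool) (i + 1) = 0 then k else 1) else 0)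
      = (if h + stepVal b = 0 then k else 1) * FF k L (h + stepVal b) := by
    intro b
    rw [FF, Finset.mul_sum]
    refine Finset.sum_congr rfl fun w _ => ?_
    rw [key, mul_ite, mul_zero]
    have hiff := adm_cons h b w h0 h2
    by_cases hA : Adm (h + stepVal b) w
    · rw [if_pos hA, if_pos (hiff.2 hA)]
    · rw [if_neg hA, if_neg (fun H => hA (hiff.1 H))]
  have e1 := key2 true
  have e2 := key2 false
  rw [show h + stepVal true = h + 1 from rfl] at e1
  rw [show h + stepVal false = h - 1 from rfl] at e2
  rw [← e1, ← e2]
  conv_lhs => unfold FF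
  rw [← (Fin.consEquiv (fun _ : Fin (L + 1) => Bool)).sum_comp, Fintype.sum_prod_type,
    Fintype.sum_bool]
  rfl

theorem FF_one (k m : ℕ) : FF k (2 * m + 1) 1 = k * (k + 1) ^ m := by
  induction m with
  | zero =>
    rw [FF_succ _ _ _ (by norm_num) (by norm_num)]
    simp [FF, Adm, psum]
  | succ m ih =>
    rw [show 2 * (m + 1) + 1 = (2 * m + 1) + 1 + 1 by ring,
      FF_succ _ _ _ (by norm_num) (by norm_num)]
    rw [FF_succ k (2 * m + 1) (1 + 1) (by norm_num) (by norm_num),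
      FF_succ k (2 * m + 1) (1 - 1) (by norm_num) (by norm_num)]
    rw [FF_out k _ (1 + 1 + 1) (by norm_num), FF_out k _ (1 - 1 - 1) (by norm_num)]
    norm_num [ih]
    ring

open scoped Classical in
/-- For all integers `n ≥ 1` and `k ≥ 1`, the sum over all Dyck
paths `P` of length `2n` of height at most `2` of `k^(r(P) - 1)`, where
`r(P)` is the number of returns to zero of `P`, equals `(k+1)^(n-1)`. -/
theorem stmt_8 (n k : ℕ) (hn : 1 ≤ n) (hk : 1 ≤ k) :
    (∑ w ∈ Finset.univ.filter
        (fun w : Fin (2 * n) → Bool => IsDyck w ∧ ∀ i : ℕ, psum w i ≤ 2),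
      k ^ (Nat.card {i : ℕ // 1 ≤ i ∧ i ≤ 2 * n ∧ psum w i = 0} - 1)) =
      (k + 1) ^ (n - 1) := by
  obtain ⟨m, rfl⟩ : ∃ m, n = m + 1 := ⟨n - 1, by omega⟩
  have h1 : FF k (2 * (m + 1)) 0 = k * (k + 1) ^ m := by
    rw [show 2 * (m + 1) = (2 * m + 1) + 1 by ring,
      FF_succ _ _ _ (by norm_num) (by norm_num), FF_out k _ (0 - 1) (by norm_num)]
    norm_num [FF_one]
  apply Nat.eq_of_mul_eq_mul_left (show 0 < k by omega)
  rw [Nat.add_sub_cancel, ← h1, Finset.mul_sum, FF, Finset.sum_filter]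
  refine Finset.sum_congr rfl fun w _ => ?_
  have hiff : (IsDyck w ∧ ∀ i : ℕ, psum w i ≤ 2) ↔ Adm 0 w := by
    simp only [IsDyck, IsBridge, Adm, zero_add, forall_and]
    tauto
  by_cases hA : Adm 0 w
  · rw [if_pos (hiff.2 hA), if_pos hA]
    have hend : psum w (2 * (m + 1)) = 0 := by simpa using hA.2
    have hc : Nat.card {i : ℕ // 1 ≤ i ∧ i ≤ 2 * (m + 1) ∧ psum w i = 0}
        = ((Finset.range (2 * (m + 1))).filter (fun i => 0 + psum w (i + 1) = 0)).card := by
      rw [← Finset.card_image_of_injective _ (add_left_injective 1)]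
      apply Nat.subtype_card
      intro x
      simp only [Finset.mem_image, Finset.mem_filter, Finset.mem_range, zero_add]
      constructor
      · rintro ⟨a, ⟨ha, hb⟩, rfl⟩
        exact ⟨by omega, by omega, hb⟩
      · rintro ⟨ha, hb, hx⟩
        refine ⟨x - 1, ⟨by omega, ?_⟩, by omega⟩
        rwa [Nat.sub_add_cancel ha]
    have hpos : 0 < ((Finset.range (2 * (m + 1))).filter
        (fun i => 0 + psum w (i + 1) = 0)).card := by
      apply Finset.card_pos.2
      refine ⟨2 * m + 1, ?_⟩
      simp only [Finset.mem_filter, Finset.mem_range, zero_add]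
      exact ⟨by omega, hend⟩
    rw [hc, ← pow_succ', Nat.sub_add_cancel hpos, Finset.prod_ite]
    simp
  · rw [if_neg (fun h => hA (hiff.1 h)), if_neg hA]
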